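/- arXiv:1411.6243 — 2 statements merged into one kernel-verified Lean document; each statement's English description precedes it below -/
import Mathlib

section
/- Under the structure regularization framework (with minimizer f of the structure-regularized and L₂-weight-regularized objective, and f^{∖i′} the minimizer with the single mini-sample term i′ removed), assuming each sample-wise loss L_τ(·, z′_j) is convex and differentiable on F, the evaluation is ρ-admissible, and the point-wise cost is τ-smooth, the distance between the two minimizers satisfies ‖f − f^{∖i′}‖₂ ≤ (ρτ/(mλα)) ‖x′_{i′}‖₂, where x′_{i′} is the input of the removed mini-sample (which has structure complexity n/α). (Equation (18) in the proof of Theorem 2.) -/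
open scoped BigOperators


lemma strong_min_aux {F : Type*} [NormedAddCommGroup F] [InnerProductSpace ℝ F]
    (φ : F → ℝ) (hφ : ConvexOn ℝ Set.univ φ) (lam : ℝ) (f : F)
    (hf : ∀ g, φ f + lam / 2 * ‖f‖ ^ 2 ≤ φ g + lam / 2 * ‖g‖ ^ 2) (g : F) :
    φ f + lam / 2 * ‖f‖ ^ 2 + lam / 2 * ‖f - g‖ ^ 2 ≤ φ g + lam / 2 * ‖g‖ ^ 2 := by
  have key : ∀ t : ℝ, 0 < t → t < 1 → (1 - t) * (lam / 2 * ‖f - g‖ ^ 2) ≤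
      (φ g + lam / 2 * ‖g‖ ^ 2) - (φ f + lam / 2 * ‖f‖ ^ 2) := by
    intro t ht ht1
    have h1 := hφ.2 (Set.mem_univ f) (Set.mem_univ g) (by linarith : 0 ≤ 1 - t) ht.le (by ring)
    have h2 := hf ((1 - t) • f + t • g)
    have h3 : ‖(1 - t) • f + t • g‖ ^ 2
        = (1 - t) * ‖f‖ ^ 2 + t * ‖g‖ ^ 2 - t * (1 - t) * ‖f - g‖ ^ 2 := by
      rw [norm_add_sq_real, norm_sub_sq_real, norm_smul, norm_smul, inner_smul_left,
        inner_smul_right, mul_pow, mul_pow, Real.norm_eq_abs, Real.norm_eq_abs, sq_abs, sq_abs]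
      simp
      ring
    rw [h3] at h2
    simp only [smul_eq_mul] at h1
    refine le_of_mul_le_mul_left ?_ ht
    nlinarith
  have h0 := hf g
  by_contra hcon
  push Not at hcon
  set K := lam / 2 * ‖f - g‖ ^ 2 with hK
  set Δ := (φ g + lam / 2 * ‖g‖ ^ 2) - (φ f + lam / 2 * ‖f‖ ^ 2) with hΔ
  have hΔ0 : 0 ≤ Δ := by linarith
  have hKΔ : Δ < K := by linarith
  have hKp : 0 < K := by linarith
  have := key ((K - Δ) / (2 * K)) (by apply div_pos <;> linarith)
    (by rw [div_lt_one (by linarith)]; linarith)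
  have e : (1 - (K - Δ) / (2 * K)) * K = (K + Δ) / 2 := by field_simp; ring
  linarith

/-- **Equation (18) in the proof of Theorem 2.**
Under the structure regularization framework: the training set consists of `m`
samples of structure complexity `n = α * n'`, decomposed into mini-samples
`(x' p, y' p)` of structure complexity `n'` indexed by `p : Fin m × Fin α`.
The function space `F` is a real inner product space with a `ρ`-admissible
evaluation `eval`, the point-wise cost `cτ` is convex and `τ`-smooth, and each
sample-wise loss `g ↦ L_τ(g, z'_p)` is convex and differentiable.  If `f`
minimizes the structure- and `L₂`-weight-regularized objective and `fminus`
minimizes the same objective with the single mini-sample term `i'` removed,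
then `‖f - fminus‖₂ ≤ (ρ * τ / (m * lam * α)) * ‖x'_{i'}‖₂`. -/
theorem minimizer_distance_bound
    {F : Type*} [NormedAddCommGroup F] [InnerProductSpace ℝ F]
    (d m α n n' : ℕ) (hm : 0 < m) (hα : 0 < α) (hn : 0 < n)
    (hdiv : n = α * n')
    (eval : F → (t : ℕ) → (Fin t → EuclideanSpace ℝ (Fin d)) → Fin t → ℝ)
    (ρ : ℝ) (hρ : 0 ≤ ρ)
    (hadm : ∀ (g g' : F) (t : ℕ) (x : Fin t → EuclideanSpace ℝ (Fin d)) (k : Fin t),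
      |eval g t x k - eval g' t x k| ≤ ρ * ‖g - g'‖ * ‖∑ k', x k'‖)
    (cτ : ℝ → ℝ → ℝ) (τ : ℝ)
    (hsmooth : ∀ y₁ y₂ ystar : ℝ, |cτ y₁ ystar - cτ y₂ ystar| ≤ τ * |y₁ - y₂|)
    (hcost_convex : ∀ ystar : ℝ, ConvexOn ℝ Set.univ (fun y : ℝ => cτ y ystar))
    (x' : Fin m × Fin α → Fin n' → EuclideanSpace ℝ (Fin d))
    (y' : Fin m × Fin α → Fin n' → ℝ)
    (hconv : ∀ p : Fin m × Fin α,
      ConvexOn ℝ Set.univ (fun g : F => ∑ k, cτ (eval g n' (x' p) k) (y' p k)))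
    (hdiff : ∀ p : Fin m × Fin α,
      Differentiable ℝ (fun g : F => ∑ k, cτ (eval g n' (x' p) k) (y' p k)))
    (lam : ℝ) (hlam : 0 < lam)
    (i' : Fin m × Fin α) (f fminus : F)
    (hf : ∀ g : F,
      1 / ((m : ℝ) * n) * ∑ p : Fin m × Fin α, ∑ k, cτ (eval f n' (x' p) k) (y' p k)
          + lam / 2 * ‖f‖ ^ 2
        ≤ 1 / ((m : ℝ) * n) * ∑ p : Fin m × Fin α, ∑ k, cτ (eval g n' (x' p) k) (y' p k)
          + lam / 2 * ‖g‖ ^ 2)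
    (hfminus : ∀ g : F,
      1 / ((m : ℝ) * n) * ∑ p ∈ Finset.univ.erase i', ∑ k, cτ (eval fminus n' (x' p) k) (y' p k)
          + lam / 2 * ‖fminus‖ ^ 2
        ≤ 1 / ((m : ℝ) * n) * ∑ p ∈ Finset.univ.erase i', ∑ k, cτ (eval g n' (x' p) k) (y' p k)
          + lam / 2 * ‖g‖ ^ 2) :
    ‖f - fminus‖ ≤ ρ * τ / ((m : ℝ) * lam * (α : ℝ)) * ‖∑ k, x' i' k‖ := by
  have hmR : (0 : ℝ) < m := by exact_mod_cast hm
  have hαR : (0 : ℝ) < α := by exact_mod_cast hα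
  have hn' : 0 < n' := by
    rcases Nat.eq_zero_or_pos n' with h | h
    · subst h; simp at hdiv; omega
    · exact h
  have hnR' : (0 : ℝ) < n' := by exact_mod_cast hn'
  have hnR : (n : ℝ) = α * n' := by exact_mod_cast hdiv
  have hτ : 0 ≤ τ := by
    have := (abs_nonneg _).trans (hsmooth 1 0 0)
    simpa using this
  set L : Fin m × Fin α → F → ℝ := fun p g => ∑ k, cτ (eval g n' (x' p) k) (y' p k) with hL
  have hc : (0 : ℝ) ≤ 1 / ((m : ℝ) * n) := by positivity
  have hcv : ∀ s : Finset (Fin m × Fin α),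
      ConvexOn ℝ Set.univ (fun g => 1 / ((m : ℝ) * n) * ∑ p ∈ s, L p g) := by
    intro s
    have h : ConvexOn ℝ Set.univ (fun g => ∑ p ∈ s, L p g) := by
      induction s using Finset.induction_on with
      | empty => simpa using convexOn_const (0 : ℝ) convex_univ
      | insert a s ha ih =>
        simp only [Finset.sum_insert ha]
        exact (hconv a).add ih
    exact h.smul hc
  have h1 := strong_min_aux _ (hcv Finset.univ) lam f hf fminus
  have h2 := strong_min_aux _ (hcv (Finset.univ.erase i')) lam fminus hfminus f
  simp only [← Finset.add_sum_erase _ _ (Finset.mem_univ i'), mul_add] at h1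
  rw [norm_sub_rev fminus f] at h2
  have h3 : L i' fminus - L i' f ≤ n' * (τ * (ρ * ‖f - fminus‖ * ‖∑ k, x' i' k‖)) := by
    simp only [hL, ← Finset.sum_sub_distrib]
    refine (Finset.sum_le_card_nsmul _ _ (τ * (ρ * ‖f - fminus‖ * ‖∑ k, x' i' k‖)) ?_).trans
      (by simp)
    intro k _
    refine (le_abs_self _).trans ((hsmooth _ _ _).trans ?_)
    rw [norm_sub_rev f fminus]
    exact mul_le_mul_of_nonneg_left (hadm _ _ _ _ _) hτ
  have h4 := mul_le_mul_of_nonneg_left h3 hc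
  have e : 1 / ((m : ℝ) * n) * (n' * (τ * (ρ * ‖f - fminus‖ * ‖∑ k, x' i' k‖)))
      = lam * (ρ * τ / ((m : ℝ) * lam * (α : ℝ)) * ‖∑ k, x' i' k‖) * ‖f - fminus‖ := by
    rw [hnR]; field_simp
  rw [e, mul_sub] at h4
  have hB : 0 ≤ ρ * τ / ((m : ℝ) * lam * (α : ℝ)) * ‖∑ k, x' i' k‖ := by positivity
  rcases (norm_nonneg (f - fminus)).eq_or_lt with h | h
  · rw [← h]; exact hB
  · refine le_of_mul_le_mul_left ?_ (mul_pos hlam h)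
    nlinarith
end

section
/- (Theorem 2, loss stability consequences.) Under the structure regularization framework, with each sample-wise loss L_τ(·, z′_j) convex and differentiable on F, ρ-admissible evaluation, τ-smooth point-wise cost, and feature values bounded by v, the minimizers f and f^{∖i′} satisfy, for every sample z = (x, y) of structure complexity n (with feature values bounded by v) and every position k: |ℓ_τ(f, z, k) − ℓ_τ(f^{∖i′}, z, k)| ≤ dτ²ρ²v²n² / (mλα²) (loss stability), and |L_τ(f, z) − L_τ(f^{∖i′}, z)| ≤ dτ²ρ²v²n³ / (mλα²) (sample loss stability). -/
open scoped BigOperators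

lemma aux_strong {F : Type*} [NormedAddCommGroup F] [InnerProductSpace ℝ F]
    (G : F → ℝ) (hG : ConvexOn ℝ Set.univ G) (lam : ℝ) (hlam : 0 < lam) (f : F)
    (hf : ∀ g, G f + lam / 2 * ‖f‖ ^ 2 ≤ G g + lam / 2 * ‖g‖ ^ 2) (g : F) :
    G f + lam / 2 * ‖f‖ ^ 2 + lam / 2 * ‖g - f‖ ^ 2 ≤ G g + lam / 2 * ‖g‖ ^ 2 := by
  have key : ∀ t : ℝ, 0 < t → t < 1 →
      (1 - t) * (lam / 2 * ‖g - f‖ ^ 2)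
        ≤ (G g + lam / 2 * ‖g‖ ^ 2) - (G f + lam / 2 * ‖f‖ ^ 2) := by
    intro t h0 h1
    have h2 := hf ((1 - t) • f + t • g)
    have h3 := hG.2 (Set.mem_univ f) (Set.mem_univ g) (by linarith : 0 ≤ 1 - t) h0.le (by ring)
    have h4 : ‖(1 - t) • f + t • g‖ ^ 2
        = (1 - t) * ‖f‖ ^ 2 + t * ‖g‖ ^ 2 - t * (1 - t) * ‖g - f‖ ^ 2 := by
      rw [norm_add_sq_real, norm_sub_sq_real, norm_smul, norm_smul, inner_smul_left,
        inner_smul_right, mul_pow, mul_pow, Real.norm_eq_abs, Real.norm_eq_abs, sq_abs, sq_abs,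
        real_inner_comm g f]
      simp only [conj_trivial]
      ring
    rw [h4] at h2
    simp only [smul_eq_mul] at h3
    have : t * ((1 - t) * (lam / 2 * ‖g - f‖ ^ 2))
        ≤ t * ((G g + lam / 2 * ‖g‖ ^ 2) - (G f + lam / 2 * ‖f‖ ^ 2)) := by
      linarith
    exact le_of_mul_le_mul_left this h0
  set A := (G g + lam / 2 * ‖g‖ ^ 2) - (G f + lam / 2 * ‖f‖ ^ 2) with hA
  have hB : 0 ≤ lam / 2 * ‖g - f‖ ^ 2 := by positivity
  set B := lam / 2 * ‖g - f‖ ^ 2 with hBd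
  suffices B ≤ A by linarith
  by_contra hc
  push Not at hc
  have k1 := key (1/2) (by norm_num) (by norm_num)
  have hA0 : 0 ≤ A := by linarith
  have hBp : 0 < B := by linarith
  have k2 := key ((B - A) / (2 * B)) (by apply div_pos <;> linarith)
    (by rw [div_lt_one (by linarith)]; linarith)
  have : (1 - (B - A) / (2 * B)) * B = (A + B) / 2 := by field_simp; ring
  linarith

lemma aux_norm (d t : ℕ) (v : ℝ) (x : Fin t → EuclideanSpace ℝ (Fin d))
    (h : ∀ k q, |x k q| ≤ v) : ‖∑ k, x k‖ ≤ t * (√d * |v|) := by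
  have h1 : ∀ k, ‖x k‖ ≤ √d * |v| := by
    intro k
    rw [EuclideanSpace.norm_eq, ← Real.sqrt_sq_eq_abs, ← Real.sqrt_mul (by positivity)]
    apply Real.sqrt_le_sqrt
    calc ∑ i, ‖x k i‖ ^ 2 ≤ ∑ i : Fin d, v ^ 2 := by
          apply Finset.sum_le_sum
          intro i _
          exact pow_le_pow_left₀ (norm_nonneg _) (h k i) 2
      _ = d * v ^ 2 := by simp
  calc _ ≤ ∑ k, ‖x k‖ := norm_sum_le _ _
    _ ≤ ∑ k : Fin t, √d * |v| := Finset.sum_le_sum fun k _ => h1 k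
    _ = _ := by simp

/-- **Theorem 2 (loss stability consequences).**
Under the structure regularization framework, the minimizers `f` and `fminus`
(with the single mini-sample term `i'` removed) satisfy, for every sample
`z = (x, y)` of structure complexity `n` with feature values bounded by `v`
and every position `k`:
`|ℓτ(f,z,k) - ℓτ(fminus,z,k)| ≤ d * τ² * ρ² * v² * n² / (m * lam * α²)`
(loss stability) and
`|Lτ(f,z) - Lτ(fminus,z)| ≤ d * τ² * ρ² * v² * n³ / (m * lam * α²)`
(sample loss stability). -/
theorem loss_stability_structure_regularization
    {F : Type*} [NormedAddCommGroup F] [InnerProductSpace ℝ F]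
    (d m α n n' : ℕ) (hm : 0 < m) (hα : 0 < α) (hn : 0 < n)
    (hdiv : n = α * n')
    (eval : F → (t : ℕ) → (Fin t → EuclideanSpace ℝ (Fin d)) → Fin t → ℝ)
    (ρ : ℝ) (hρ : 0 ≤ ρ)
    (hadm : ∀ (g g' : F) (t : ℕ) (x : Fin t → EuclideanSpace ℝ (Fin d)) (k : Fin t),
      |eval g t x k - eval g' t x k| ≤ ρ * ‖g - g'‖ * ‖∑ k', x k'‖)
    (cτ : ℝ → ℝ → ℝ) (τ : ℝ)
    (hsmooth : ∀ y₁ y₂ ystar : ℝ, |cτ y₁ ystar - cτ y₂ ystar| ≤ τ * |y₁ - y₂|)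
    (hcost_convex : ∀ ystar : ℝ, ConvexOn ℝ Set.univ (fun y : ℝ => cτ y ystar))
    (v : ℝ)
    (x' : Fin m × Fin α → Fin n' → EuclideanSpace ℝ (Fin d))
    (y' : Fin m × Fin α → Fin n' → ℝ)
    (hval : ∀ (p : Fin m × Fin α) (k : Fin n') (q : Fin d), |x' p k q| ≤ v)
    (hconv : ∀ p : Fin m × Fin α,
      ConvexOn ℝ Set.univ (fun g : F => ∑ k, cτ (eval g n' (x' p) k) (y' p k)))
    (hdiff : ∀ p : Fin m × Fin α,
      Differentiable ℝ (fun g : F => ∑ k, cτ (eval g n' (x' p) k) (y' p k)))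
    (lam : ℝ) (hlam : 0 < lam)
    (f : F)
    (hf : ∀ g : F,
      1 / ((m : ℝ) * n) * ∑ p : Fin m × Fin α, ∑ k, cτ (eval f n' (x' p) k) (y' p k)
          + lam / 2 * ‖f‖ ^ 2
        ≤ 1 / ((m : ℝ) * n) * ∑ p : Fin m × Fin α, ∑ k, cτ (eval g n' (x' p) k) (y' p k)
          + lam / 2 * ‖g‖ ^ 2)
    (i' : Fin m × Fin α) (fminus : F)
    (hfminus : ∀ g : F,
      1 / ((m : ℝ) * n) * ∑ p ∈ Finset.univ.erase i', ∑ k, cτ (eval fminus n' (x' p) k) (y' p k)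
          + lam / 2 * ‖fminus‖ ^ 2
        ≤ 1 / ((m : ℝ) * n) * ∑ p ∈ Finset.univ.erase i', ∑ k, cτ (eval g n' (x' p) k) (y' p k)
          + lam / 2 * ‖g‖ ^ 2) :
    ∀ (x : Fin n → EuclideanSpace ℝ (Fin d)) (y : Fin n → ℝ),
      (∀ (k : Fin n) (q : Fin d), |x k q| ≤ v) →
      (∀ k : Fin n,
        |cτ (eval f n x k) (y k) - cτ (eval fminus n x k) (y k)|
          ≤ (d : ℝ) * τ ^ 2 * ρ ^ 2 * v ^ 2 * (n : ℝ) ^ 2 / ((m : ℝ) * lam * (α : ℝ) ^ 2))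
      ∧ |(∑ k, cτ (eval f n x k) (y k)) - ∑ k, cτ (eval fminus n x k) (y k)|
          ≤ (d : ℝ) * τ ^ 2 * ρ ^ 2 * v ^ 2 * (n : ℝ) ^ 3 / ((m : ℝ) * lam * (α : ℝ) ^ 2) := by
  intro x y hx
  have hτ : 0 ≤ τ := by
    have := (abs_nonneg _).trans (hsmooth 1 0 0)
    simpa using this
  have hmr : (0:ℝ) < m := by exact_mod_cast hm
  have hnr : (0:ℝ) < n := by exact_mod_cast hn
  have hαr : (0:ℝ) < α := by exact_mod_cast hα
  have hnn : (n:ℝ) = α * n' := by exact_mod_cast hdiv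
  have hn' : (0:ℝ) < n' := by
    rcases Nat.eq_zero_or_pos n' with h | h
    · subst h; simp at hdiv; omega
    · exact_mod_cast h
  set D := ‖f - fminus‖ with hD
  have hD0 : 0 ≤ D := norm_nonneg _
  -- point-wise bound
  have hpt : ∀ (t : ℕ) (x : Fin t → EuclideanSpace ℝ (Fin d)) (y : Fin t → ℝ),
      (∀ k q, |x k q| ≤ v) → ∀ k,
      |cτ (eval f t x k) (y k) - cτ (eval fminus t x k) (y k)|
        ≤ τ * (ρ * D * (t * (√d * |v|))) := by
    intro t x y hx k
    refine (hsmooth _ _ _).trans (mul_le_mul_of_nonneg_left ?_ hτ)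
    refine (hadm f fminus t x k).trans (mul_le_mul_of_nonneg_left (aux_norm d t v x hx) ?_)
    positivity
  have hsumb : ∀ (t : ℕ) (x : Fin t → EuclideanSpace ℝ (Fin d)) (y : Fin t → ℝ) (C : ℝ),
      (∀ k, |cτ (eval f t x k) (y k) - cτ (eval fminus t x k) (y k)| ≤ C) →
      |(∑ k, cτ (eval f t x k) (y k)) - ∑ k, cτ (eval fminus t x k) (y k)| ≤ t * C := by
    intro t x y C h
    rw [← Finset.sum_sub_distrib]
    refine (Finset.abs_sum_le_sum_abs _ _).trans ?_
    refine (Finset.sum_le_sum fun k _ => h k).trans ?_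
    simp
  have hcs : ∀ s : Finset (Fin m × Fin α), ConvexOn ℝ Set.univ (fun g : F =>
      1 / ((m : ℝ) * n) * ∑ p ∈ s, ∑ k, cτ (eval g n' (x' p) k) (y' p k)) := by
    intro s
    have h1 : ConvexOn ℝ Set.univ (fun g : F =>
        ∑ p ∈ s, ∑ k, cτ (eval g n' (x' p) k) (y' p k)) := by
      induction s using Finset.induction_on with
      | empty => simpa using convexOn_const (0:ℝ) convex_univ
      | insert a s ha ih =>
        simp only [Finset.sum_insert ha]
        exact (hconv a).add ih
    exact h1.smul (by positivity : (0:ℝ) ≤ 1 / ((m : ℝ) * n))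
  have s1 := aux_strong _ (hcs Finset.univ) lam hlam f hf fminus
  have s2 := aux_strong _ (hcs (Finset.univ.erase i')) lam hlam fminus hfminus f
  rw [norm_sub_rev, ← hD] at s1
  rw [← hD] at s2
  simp only [← Finset.add_sum_erase _ _ (Finset.mem_univ i')] at s1
  have hL := hsumb n' (x' i') (y' i') _ (hpt n' (x' i') (y' i') (hval i'))
  have hL2 := (abs_le.mp hL).1
  set K := √(d:ℝ) * |v| with hK
  have hK0 : 0 ≤ K := by positivity
  have hK2 : K ^ 2 = d * v ^ 2 := by
    rw [hK, mul_pow, Real.sq_sqrt (by positivity), sq_abs]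
  have hc : (0:ℝ) < 1 / ((m : ℝ) * n) := by positivity
  have h5 : lam * D ^ 2 ≤ 1 / ((m : ℝ) * n) * (n' * (τ * (ρ * D * (n' * K)))) := by
    have := mul_le_mul_of_nonneg_left hL2 hc.le
    linarith
  have h6 : lam * D * (m * n) ≤ n' * (τ * (ρ * (n' * K))) := by
    rcases hD0.eq_or_lt with h | h
    · rw [← h]; simp; positivity
    · have : D * (lam * D * (m * n)) ≤ D * (n' * (τ * (ρ * (n' * K)))) := by
        rw [one_div, ← div_eq_inv_mul, le_div_iff₀ (by positivity)] at h5
        linarith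
      exact le_of_mul_le_mul_left this h
  have hfin : τ * (ρ * D * (n * K)) ≤
      (d : ℝ) * τ ^ 2 * ρ ^ 2 * v ^ 2 * (n : ℝ) ^ 2 / ((m : ℝ) * lam * (α : ℝ) ^ 2) := by
    rw [le_div_iff₀ (by positivity)]
    have h7 := mul_le_mul_of_nonneg_left h6 (by positivity : 0 ≤ τ * ρ * K * (α:ℝ) ^ 2)
    have h8 : (d : ℝ) * τ ^ 2 * ρ ^ 2 * v ^ 2 * (n : ℝ) ^ 2
        = τ * ρ * K * (α:ℝ) ^ 2 * (n' * (τ * (ρ * (n' * K)))) := by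
      calc _ = (d * v ^ 2) * τ ^ 2 * ρ ^ 2 * (n : ℝ) ^ 2 := by ring
        _ = _ := by rw [← hK2, hnn]; ring
    linarith
  have hP := fun k => (hpt n x y hx k).trans hfin
  refine ⟨hP, (hsumb n x y _ hP).trans (le_of_eq ?_)⟩
  ring
end
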